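/- Let w be a weight function on [-1,1], let (π_k)_{k≤n} be orthonormal polynomials for w satisfying the three-term recurrence with Jacobi matrix J_n, and let (λ_i, ν_i)_{i<n} be an n-point Gauss quadrature rule for w whose nodes are zeros of π_n. Let every entry A_{kl} (k,l < N) of A and every entry b_k of b be a real polynomial, assume A(λ_i) is invertible for each i < n, and let X_p be the N×n pseudospectral coefficient matrix with columns X_p(:,j) = Σ_{i<n} ν_i A(λ_i)⁻¹ b(λ_i) π_j(λ_i). Then for all k < N and i < n: Σ_{l<N} Σ_{j<n} (A_{kl}(J_n))_{ij} · X_p(l,j) = (b_k(J_n))_{i,0}, where p(J_n) denotes evaluation of the polynomial p at the matrix J_n and the subscript (i,0) denotes the entry in row i of the first column. In block form, A(J_n) vec(X_pᵀ) = b(J_n) e_0. -/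

import Mathlib

open MeasureTheory Polynomial Matrix

/-- The `n × n` symmetric tridiagonal Jacobi matrix with diagonal entries
`α 0, …, α (n-1)` and off-diagonal entries `β 1, …, β (n-1)`. -/
def jacobiMatrix (α β : ℕ → ℝ) (n : ℕ) : Matrix (Fin n) (Fin n) ℝ :=
  Matrix.of fun i j =>
    if (i : ℕ) = (j : ℕ) then α (i : ℕ)
    else if (i : ℕ) + 1 = (j : ℕ) ∨ (j : ℕ) + 1 = (i : ℕ) then β (max (i : ℕ) (j : ℕ))
    else 0

/-!
Since the node `λₘ` is a zero of `πₙ`, the recurrence makes `vₘ = (π₀(λₘ), …, πₙ₋₁(λₘ))` an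
eigenvector of `Jₙ` for the eigenvalue `λₘ`, so that `p(Jₙ) vₘ = p(λₘ) vₘ` for every polynomial `p`.
Exactness of the quadrature rule turns the orthogonality of `πⱼ` to `1` into the eigenvector
expansion `e₀ = ∑ₘ νₘ vₘ`. The `l`-th row of `X_p` is `∑ₘ yₘ(l) νₘ vₘ`, where
`A(λₘ) yₘ = b(λₘ)`, so the system holds because it holds on each eigenvector separately.
-/

lemma sum_aeval_sum_smul_eq_aeval_sum {R M ι τ : Type*} [CommRing R] [AddCommGroup M] [Module R M]
    [Fintype ι] [Fintype τ] {T : Module.End R M} {x : ι → R} {v : ι → M}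
    (hv : ∀ i, T (v i) = x i • v i) {a : τ → R[X]} {b : R[X]} {y : ι → τ → R}
    (hy : ∀ i, ∑ l, (a l).eval (x i) * y i l = b.eval (x i)) :
    ∑ l, aeval T (a l) (∑ i, y i l • v i) = aeval T b (∑ i, v i) := by
  have haeval (p : R[X]) (i : ι) : aeval T p (v i) = p.eval (x i) • v i :=
    Module.End.aeval_apply_of_mem_apply_eq_smul (hv i)
  calc ∑ l, aeval T (a l) (∑ i, y i l • v i)
      = ∑ l, ∑ i, ((a l).eval (x i) * y i l) • v i := by
        simp only [map_sum, map_smul, haeval, smul_smul, mul_comm]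
    _ = ∑ i, b.eval (x i) • v i := by
        rw [Finset.sum_comm]
        simp only [← Finset.sum_smul, hy]
    _ = aeval T b (∑ i, v i) := by
        simp only [map_sum, haeval]

lemma aeval_toLin'_apply {R m : Type*} [CommRing R] [Fintype m] [DecidableEq m]
    (J : Matrix m m R) (p : R[X]) (u : m → R) : aeval (toLin' J) p u = aeval J p *ᵥ u :=
  LinearMap.congr_fun (aeval_algHom_apply (toLinAlgEquiv' : Matrix m m R ≃ₐ[R] _) J p) u

section JacobiMatrix

variable {α β : ℕ → ℝ} {n : ℕ}

lemma jacobiMatrix_apply_eq_add (i j : Fin n) :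
    jacobiMatrix α β n i j = (if (j : ℕ) = i then α i else 0)
      + (if (j : ℕ) = i + 1 then β (i + 1) else 0) + (if (j : ℕ) + 1 = i then β i else 0) := by
  simp only [jacobiMatrix, of_apply]
  grind

lemma jacobiMatrix_mulVec_apply (f : ℕ → ℝ) (i : Fin n) :
    (jacobiMatrix α β n *ᵥ fun j : Fin n => f j) i
      = α i * f i + (if (i : ℕ) + 1 < n then β (i + 1) * f (i + 1) else 0)
        + β i * (if (i : ℕ) = 0 then 0 else f (i - 1)) := by
  have hlower : ∑ j ∈ Finset.range n, (if j + 1 = (i : ℕ) then β i * f j else 0)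
      = β i * (if (i : ℕ) = 0 then 0 else f (i - 1)) := by
    obtain ⟨_ | k, hk⟩ := i
    · simp
    · simp [Nat.lt_of_succ_lt hk]
  simp only [mulVec, dotProduct, jacobiMatrix_apply_eq_add]
  rw [Fin.sum_univ_eq_sum_range (fun j => ((if j = i then α i else 0)
    + (if j = i + 1 then β (i + 1) else 0) + (if j + 1 = i then β i else 0)) * f j) n]
  simp only [add_mul, ite_mul, zero_mul, Finset.sum_add_distrib, hlower, Finset.sum_ite_eq',
    Finset.mem_range, i.isLt, if_true]

lemma jacobiMatrix_mulVec_eq_smul_of_recurrence {f : ℕ → ℝ} {x : ℝ}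
    (hrec : ∀ k < n, β (k + 1) * f (k + 1)
      = (x - α k) * f k - β k * (if k = 0 then 0 else f (k - 1)))
    (hf : f n = 0) :
    (jacobiMatrix α β n *ᵥ fun j : Fin n => f j) = x • fun j : Fin n => f j := by
  funext i
  have hupper : (if (i : ℕ) + 1 < n then β (i + 1) * f (i + 1) else 0)
      = β (i + 1) * f (i + 1) := by
    rcases (Nat.succ_le_of_lt i.isLt).lt_or_eq with hi | hi
    · exact if_pos hi
    · rw [show (i : ℕ) + 1 = n from hi, hf, mul_zero, ite_self]
  rw [jacobiMatrix_mulVec_apply, hupper, hrec i i.isLt, Pi.smul_apply, smul_eq_mul]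
  ring

end JacobiMatrix

lemma sum_weight_mul_eval_eq_ite_of_exact {ι : Type*} [Fintype ι] {a b : ℝ} {w : ℝ → ℝ}
    {π : ℕ → ℝ[X]} {lam ν : ι → ℝ} {d j : ℕ} (hπ0 : π 0 = 1) (hdeg : (π j).degree < d)
    (horth : (∫ s in a..b, (π j).eval s * (π 0).eval s * w s) = if j = 0 then 1 else 0)
    (hexact : ∀ p : ℝ[X], p.degree < d →
      (∫ s in a..b, p.eval s * w s) = ∑ i, ν i * p.eval (lam i)) :
    ∑ i, ν i * (π j).eval (lam i) = if j = 0 then 1 else 0 := by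
  rw [← hexact (π j) hdeg, ← horth]
  simp [hπ0]

theorem pseudospectral_jacobi_system_general {ι κ τ : Type*} [Fintype ι] [Fintype τ]
    {n : ℕ} (hn : 0 < n) {π : ℕ → ℝ[X]} {α β : ℕ → ℝ}
    (hrec : ∀ k < n, ∀ s : ℝ, β (k + 1) * (π (k + 1)).eval s
      = (s - α k) * (π k).eval s - β k * (if k = 0 then 0 else (π (k - 1)).eval s))
    {lam ν : ι → ℝ} (hzeros : ∀ q, (π n).eval (lam q) = 0)
    (hsum : ∀ j < n, ∑ q, ν q * (π j).eval (lam q) = if j = 0 then 1 else 0)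
    {A : κ → τ → ℝ[X]} {b : κ → ℝ[X]} {Y : ι → τ → ℝ}
    (hY : ∀ q, (Matrix.of fun k l => (A k l).eval (lam q)) *ᵥ Y q = fun k => (b k).eval (lam q))
    {Xp : Matrix τ (Fin n) ℝ}
    (hXp : ∀ l j, Xp l j = ∑ q, ν q * Y q l * (π (j : ℕ)).eval (lam q)) (k : κ) (i : Fin n) :
    (∑ l, ∑ j, aeval (jacobiMatrix α β n) (A k l) i j * Xp l j)
      = aeval (jacobiMatrix α β n) (b k) i ⟨0, hn⟩ := by
  let v (q : ι) : Fin n → ℝ := ν q • fun j : Fin n => (π j).eval (lam q)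
  have hv (q : ι) : toLin' (jacobiMatrix α β n) (v q) = lam q • v q := by
    rw [toLin'_apply, mulVec_smul, jacobiMatrix_mulVec_eq_smul_of_recurrence
      (f := fun j => (π j).eval (lam q)) (fun k hk => hrec k hk (lam q)) (hzeros q), smul_comm]
  have hv_sum : ∑ q, v q = Pi.single ⟨0, hn⟩ 1 := by
    funext j
    simp [v, hsum j j.isLt, Pi.single_apply, Fin.ext_iff]
  have hX (l : τ) : Xp l = ∑ q, Y q l • v q := by
    funext j
    simp [v, hXp, mul_left_comm, mul_assoc]
  have hrow := sum_aeval_sum_smul_eq_aeval_sum hv (fun q => congrFun (hY q) k)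
  simp only [aeval_toLin'_apply, ← hX, hv_sum, mulVec_single_one] at hrow
  simpa [mulVec, dotProduct] using congrFun hrow i

/-- **The pseudospectral coefficients satisfy `A(Jₙ) vec(Xpᵀ) = b(Jₙ) e₀`.**
With orthonormal polynomials `π` for a weight `w` on `[-1,1]`, three-term recurrence
coefficients `α`, `β`, an `n`-point Gauss rule whose nodes are zeros of `π n`, and
`A`, `b` with polynomial entries (`A (lam i)` invertible), the pseudospectral
coefficient matrix `Xp` satisfies, blockwise,
`∑ l ∑ j (A k l)(Jₙ)_{i j} * Xp l j = (b k)(Jₙ)_{i 0}`. -/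
theorem pseudospectral_jacobi_system
    (n N : ℕ) (hn : 0 < n) (w : ℝ → ℝ)
    (hw_pos : ∀ s ∈ Set.Icc (-1 : ℝ) 1, 0 < w s)
    (hw_norm : (∫ s in (-1 : ℝ)..1, w s) = 1)
    (π : ℕ → Polynomial ℝ)
    (hπ0 : π 0 = 1)
    (hπdeg : ∀ k, (π k).degree = (k : ℕ))
    (hπorth : ∀ j k : ℕ, (∫ s in (-1 : ℝ)..1, (π j).eval s * (π k).eval s * w s)
      = if j = k then (1 : ℝ) else 0)
    (α β : ℕ → ℝ) (hβ : ∀ k : ℕ, 0 < β (k + 1))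
    (hrec : ∀ (k : ℕ) (s : ℝ), β (k + 1) * (π (k + 1)).eval s
      = (s - α k) * (π k).eval s - β k * (if k = 0 then 0 else (π (k - 1)).eval s))
    (lam ν : Fin n → ℝ)
    (hlam_mem : ∀ i, lam i ∈ Set.Icc (-1 : ℝ) 1)
    (hlam_inj : Function.Injective lam)
    (hν_pos : ∀ i, 0 < ν i)
    (hexact : ∀ p : Polynomial ℝ, p.degree < (2 * n : ℕ) →
      (∫ s in (-1 : ℝ)..1, p.eval s * w s) = ∑ i, ν i * p.eval (lam i))
    (hzeros : ∀ i, (π n).eval (lam i) = 0)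
    (A : Fin N → Fin N → Polynomial ℝ) (b : Fin N → Polynomial ℝ)
    (hAinv : ∀ i : Fin n, IsUnit (Matrix.of fun k l : Fin N => (A k l).eval (lam i)))
    (Xp : Matrix (Fin N) (Fin n) ℝ)
    (hXp : ∀ (l : Fin N) (j : Fin n),
      Xp l j = ∑ i : Fin n,
        ν i * (((Matrix.of fun k l' : Fin N => (A k l').eval (lam i))⁻¹
            *ᵥ fun k => (b k).eval (lam i)) l) * (π (j : ℕ)).eval (lam i)) :
    ∀ (k : Fin N) (i : Fin n),
      (∑ l : Fin N, ∑ j : Fin n,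
        (Polynomial.aeval (jacobiMatrix α β n) (A k l)) i j * Xp l j)
      = (Polynomial.aeval (jacobiMatrix α β n) (b k)) i ⟨0, hn⟩ :=
  pseudospectral_jacobi_system_general hn (fun k _ => hrec k) hzeros
    (fun j hj => sum_weight_mul_eval_eq_ite_of_exact hπ0
      (by rw [hπdeg]; exact_mod_cast (by omega : j < 2 * n)) (hπorth j 0) hexact)
    (fun i => by
      rw [mulVec_mulVec, mul_nonsing_inv _ ((isUnit_iff_isUnit_det _).1 (hAinv i)), one_mulVec])
    hXp
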